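/- arXiv:0907.4728 — 3 statements merged into one kernel-verified Lean document; each statement's English description precedes it below -/
import Mathlib

section
/- When the V blocks have exactly the same size n/V, the corrected V-fold cross-validation criterion of Burman equals the empirical risk plus the V-fold penalty: for arbitrary points ξ_1,…,ξ_n ∈ Ξ, any map γ : S × Ξ → ℝ, any algorithm A, and any partition A_1,…,A_V of {1,…,n} with card(A_j) = n/V for every j, one has L̂^VF(A;D_n;(A_j)) + L(A(D_n);P_n) − (1/V) Σ_{j=1}^V L(A(D_n^{(−A_j)});P_n) = L(A(D_n);P_n) + pen_VF(A;D_n), where pen_VF(A;D_n) = ((V−1)/V) Σ_{j=1}^V [ L(A(D_n^{(−A_j)});P_n) − L(A(D_n^{(−A_j)});P_n^{(−A_j)}) ]. -/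
open Finset

/-- The estimator trained on the subsample of `D` indexed by the subset `I`. -/
noncomputable def fitOn {Ξ S : Type*} (A : (m : ℕ) → (Fin m → Ξ) → S) {n : ℕ}
    (D : Fin n → Ξ) (I : Finset (Fin n)) : S :=
  A I.card fun k => D (I.orderIsoOfFin rfl k)

/-- The empirical loss `L(t; Q_I)` of `t` on the subsample of `D` indexed by `I`:
the average of the contrast values `γ(t; ξ_i)` for `i ∈ I`.  For `I = univ` this is
`L(t; P_n)`, and for `I = Blᶜ` this is `L(t; P_n^{(−Bl)})`. -/
noncomputable def empLoss {Ξ S : Type*} (γ : S → Ξ → ℝ) {n : ℕ}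
    (D : Fin n → Ξ) (t : S) (I : Finset (Fin n)) : ℝ :=
  ((I.card : ℝ))⁻¹ * ∑ i ∈ I, γ t (D i)

/-!
The full empirical loss is the mixture of the losses on a block `B` and on its complement, with
weights `1 / V` and `(V - 1) / V` when `V * #B = n`. Hence `L(t; P_B) - L(t; P_n)` is `V - 1` times
`L(t; P_n) - L(t; P_n^{(-B)})` for every fixed `t`. Taking `t = A(D_n^{(-B)})` and averaging over
the blocks gives the identity.
-/

section EmpLoss

variable {Ξ S : Type*} (γ : S → Ξ → ℝ) {n : ℕ} (D : Fin n → Ξ) (t : S)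

theorem card_mul_empLoss (I : Finset (Fin n)) : #I * empLoss γ D t I = ∑ i ∈ I, γ t (D i) := by
  rcases I.eq_empty_or_nonempty with rfl | hI
  · simp
  · exact mul_inv_cancel_left₀ (Nat.cast_ne_zero.mpr hI.card_ne_zero) _

theorem card_mul_empLoss_add_card_compl_mul_empLoss_compl (B : Finset (Fin n)) :
    #B * empLoss γ D t B + #Bᶜ * empLoss γ D t Bᶜ = n * empLoss γ D t univ := by
  calc #B * empLoss γ D t B + #Bᶜ * empLoss γ D t Bᶜ
      = ∑ i ∈ B, γ t (D i) + ∑ i ∈ Bᶜ, γ t (D i) := by simp only [card_mul_empLoss]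
    _ = ∑ i, γ t (D i) := sum_add_sum_compl B _
    _ = n * empLoss γ D t univ := by rw [← card_mul_empLoss, card_fin]

theorem empLoss_sub_empLoss_univ {V : ℝ} (hn : 0 < n) {B : Finset (Fin n)} (hB : V * #B = n) :
    empLoss γ D t B - empLoss γ D t univ
      = (V - 1) * (empLoss γ D t univ - empLoss γ D t Bᶜ) := by
  have hcard_ne_zero : (#B : ℝ) ≠ 0 := right_ne_zero_of_mul (hB ▸ Nat.cast_ne_zero.mpr hn.ne')
  have hcard_compl : (#B + #Bᶜ : ℝ) = n := by
    exact_mod_cast (card_add_card_compl B).trans (Fintype.card_fin n)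
  have hmixture := card_mul_empLoss_add_card_compl_mul_empLoss_compl γ D t B
  apply mul_left_cancel₀ hcard_ne_zero
  linear_combination
    hmixture - empLoss γ D t Bᶜ * hcard_compl + (empLoss γ D t Bᶜ - empLoss γ D t univ) * hB

end EmpLoss

/-- With `Bl` ranging over all `p`-element subsets, `w` constant and `V = n / p`, this is the
identity for leave-`p`-out cross-validation. -/
theorem stmt10_general {Ξ S ι : Type*} [Fintype ι] (γ : S → Ξ → ℝ)
    (A : (m : ℕ) → (Fin m → Ξ) → S) {n : ℕ} (hn : 0 < n) (D : Fin n → Ξ) (w : ι → ℝ)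
    {V : ℝ} (Bl : ι → Finset (Fin n)) (hsize : ∀ j, V * #(Bl j) = n) :
    ∑ j, w j * empLoss γ D (fitOn A D (Bl j)ᶜ) (Bl j)
        + empLoss γ D (fitOn A D univ) univ
        - ∑ j, w j * empLoss γ D (fitOn A D (Bl j)ᶜ) univ
      = empLoss γ D (fitOn A D univ) univ
        + (V - 1) * ∑ j, w j * (empLoss γ D (fitOn A D (Bl j)ᶜ) univ
            - empLoss γ D (fitOn A D (Bl j)ᶜ) (Bl j)ᶜ) := by
  rw [add_sub_right_comm, ← sum_sub_distrib, mul_sum, add_comm]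
  congr! 2 with j
  rw [← mul_sub, empLoss_sub_empLoss_univ γ D _ hn (hsize j), mul_left_comm]

/-- When the `V` blocks have exactly the same size `n/V`, the corrected
V-fold cross-validation criterion of Burman equals the empirical risk plus the V-fold
penalty: `L̂^VF + L(A(D_n); P_n) − (1/V) Σ_j L(A(D_n^{(−A_j)}); P_n)`
`= L(A(D_n); P_n) + pen_VF(A; D_n)` where
`pen_VF(A; D_n) = ((V−1)/V) Σ_j [L(A(D_n^{(−A_j)}); P_n) − L(A(D_n^{(−A_j)}); P_n^{(−A_j)})]`. -/
theorem stmt10 {Ξ S : Type*} (γ : S → Ξ → ℝ) (A : (m : ℕ) → (Fin m → Ξ) → S)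
    {n V : ℕ} (hV : 0 < V) (hn : 0 < n) (hdvd : V ∣ n)
    (D : Fin n → Ξ) (Bl : Fin V → Finset (Fin n))
    (hpart : ∀ i : Fin n, ∃! j : Fin V, i ∈ Bl j)
    (hsize : ∀ j, (Bl j).card = n / V) :
    -- corrected V-fold CV criterion
    (((V : ℝ))⁻¹ * ∑ j, empLoss γ D (fitOn A D (Bl j)ᶜ) (Bl j))
        + empLoss γ D (fitOn A D Finset.univ) Finset.univ
        - ((V : ℝ))⁻¹ * ∑ j, empLoss γ D (fitOn A D (Bl j)ᶜ) Finset.univ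
      -- equals empirical risk plus the V-fold penalty
      = empLoss γ D (fitOn A D Finset.univ) Finset.univ
        + ((V : ℝ) - 1) / (V : ℝ) *
            ∑ j, (empLoss γ D (fitOn A D (Bl j)ᶜ) Finset.univ
              - empLoss γ D (fitOn A D (Bl j)ᶜ) (Bl j)ᶜ) := by
  have hratio (j : Fin V) : (V : ℝ) * #(Bl j) = n := by
    exact_mod_cast (hsize j).symm ▸ Nat.mul_div_cancel' hdvd
  simpa only [← mul_sum, div_eq_mul_inv, mul_assoc] using
    stmt10_general γ A hn D (fun _ => (V : ℝ)⁻¹) Bl hratio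
end

section
/- Closed-form formula for the leave-one-out estimator of the quadratic risk of a histogram density estimator: let μ be a σ-finite measure on a measurable space Ξ, let (I_λ)_{λ∈Λ} be a finite measurable partition of Ξ with 0 < μ(I_λ) < ∞ for every λ, and let n ≥ 2 and ξ_1,…,ξ_n ∈ Ξ be arbitrary points with bin counts n_λ = card{i : ξ_i ∈ I_λ}. Then the leave-one-out estimator (1/n) Σ_{j=1}^n γ(ŝ_{D_n^{(−j)}}; ξ_j) equals Σ_{λ∈Λ} n_λ (2n − 1 − n·n_λ) / ( n (n−1)² μ(I_λ) ). -/
open MeasureTheory Finset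

/-- The histogram density estimator with respect to `μ`, built on the partition
`(Ip l)_{l ∈ Λ}`, from a sample of size `N` with bin counts `cnt`. -/
noncomputable def histogram {Ξ Λ : Type*} [MeasurableSpace Ξ] [Fintype Λ]
    (μ : Measure Ξ) (Ip : Λ → Set Ξ) (N : ℕ) (cnt : Λ → ℕ) : Ξ → ℝ :=
  fun x => ∑ l, (cnt l : ℝ) / ((N : ℝ) * (μ (Ip l)).toReal)
    * Set.indicator (Ip l) (fun _ => (1 : ℝ)) x

/-! Almost everywhere disjointness of the bins makes `∫ ŝ² dμ` a sum over bins, so the whole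
estimator splits bin by bin. For a bin holding `c` of the `n` points, deleting `ξ_j` lowers its
count to `c - 1` for the `c` points in the bin and leaves it at `c` for the other `n - c`. If the
bin has measure `m`, its contribution to the sum over `j` is therefore
`(c (c - 1)² + (n - c) c²) / ((n - 1)² m) - 2 c (c - 1) / ((n - 1) m)`. -/

section IndicatorSums

variable {Ξ Λ : Type*} [MeasurableSpace Ξ] [Fintype Λ] {μ : Measure Ξ} {Ip : Λ → Set Ξ}

lemma integral_sq_sum_mul_indicator (hmeas : ∀ l, NullMeasurableSet (Ip l) μ)
    (hfin : ∀ l, μ (Ip l) ≠ ⊤) (a : Λ → ℝ) :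
    ∫ x, (∑ l, a l * (Ip l).indicator (fun _ => (1 : ℝ)) x) ^ 2 ∂μ
      = ∑ k, ∑ l, a k * a l * μ.real (Ip k ∩ Ip l) := by
  have expand_sq (x : Ξ) : (∑ l, a l * (Ip l).indicator (fun _ => (1 : ℝ)) x) ^ 2
      = ∑ k, ∑ l, (Ip k ∩ Ip l).indicator (fun _ => a k * a l) x := by
    rw [sq, Fintype.sum_mul_sum]
    refine Fintype.sum_congr _ _ fun k => Fintype.sum_congr _ _ fun l => ?_
    by_cases hk : x ∈ Ip k <;> by_cases hl : x ∈ Ip l <;> simp [hk, hl]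
  have inter_meas (k l : Λ) : NullMeasurableSet (Ip k ∩ Ip l) μ := (hmeas k).inter (hmeas l)
  have integrable_term (k l : Λ) :
      Integrable ((Ip k ∩ Ip l).indicator fun _ => a k * a l) μ :=
    (integrableOn_const (measure_inter_ne_top_of_left_ne_top (hfin k))).integrable_indicator₀
      (inter_meas k l)
  simp_rw [expand_sq]
  rw [integral_finsetSum _ fun k _ => integrable_finsetSum _ fun l _ => integrable_term k l]
  refine Fintype.sum_congr _ _ fun k => ?_
  rw [integral_finsetSum _ fun l _ => integrable_term k l]
  refine Fintype.sum_congr _ _ fun l => ?_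
  rw [integral_indicator₀ (inter_meas k l), setIntegral_const, smul_eq_mul, mul_comm]

lemma integral_sq_sum_mul_indicator_of_aedisjoint (hmeas : ∀ l, NullMeasurableSet (Ip l) μ)
    (hdisj : Pairwise (Function.onFun (AEDisjoint μ) Ip)) (hfin : ∀ l, μ (Ip l) ≠ ⊤)
    (a : Λ → ℝ) :
    ∫ x, (∑ l, a l * (Ip l).indicator (fun _ => (1 : ℝ)) x) ^ 2 ∂μ
      = ∑ l, a l ^ 2 * μ.real (Ip l) := by
  rw [integral_sq_sum_mul_indicator hmeas hfin]
  refine Fintype.sum_congr _ _ fun k => ?_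
  have off_diagonal (l : Λ) (hl : l ≠ k) : μ.real (Ip k ∩ Ip l) = 0 := by
    rw [measureReal_def, hdisj hl.symm, ENNReal.toReal_zero]
  rw [Fintype.sum_eq_single k fun l hl => by rw [off_diagonal l hl, mul_zero],
    Set.inter_self, sq]

end IndicatorSums

section Contrast

variable {Ξ Λ : Type*} [MeasurableSpace Ξ] [Fintype Λ] {μ : Measure Ξ} {Ip : Λ → Set Ξ}

/-- The contrast `γ(t; x) = ∫ t² dμ - 2 t(x)`, whose expectation in `x` under a density `s` is the
quadratic risk `‖t - s‖²` up to the constant `‖s‖²`. The integral is `0` by convention when `t²` is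
not integrable. -/
noncomputable def quadraticContrast (μ : Measure Ξ) (t : Ξ → ℝ) (x : Ξ) : ℝ :=
  (∫ y, t y ^ 2 ∂μ) - 2 * t x

lemma integral_histogram_sq (hmeas : ∀ l, NullMeasurableSet (Ip l) μ)
    (hdisj : Pairwise (Function.onFun (AEDisjoint μ) Ip)) (hfin : ∀ l, μ (Ip l) ≠ ⊤)
    (N : ℕ) (cnt : Λ → ℕ) :
    ∫ x, histogram μ Ip N cnt x ^ 2 ∂μ = ∑ l, (cnt l : ℝ) ^ 2 / ((N : ℝ) ^ 2 * μ.real (Ip l)) := by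
  unfold histogram
  rw [integral_sq_sum_mul_indicator_of_aedisjoint hmeas hdisj hfin]
  refine Fintype.sum_congr _ _ fun l => ?_
  rw [measureReal_def]
  field_simp

lemma quadraticContrast_histogram (hmeas : ∀ l, NullMeasurableSet (Ip l) μ)
    (hdisj : Pairwise (Function.onFun (AEDisjoint μ) Ip)) (hfin : ∀ l, μ (Ip l) ≠ ⊤)
    (N : ℕ) (cnt : Λ → ℕ) (x : Ξ) :
    quadraticContrast μ (histogram μ Ip N cnt) x
      = ∑ l, ((cnt l : ℝ) ^ 2 / ((N : ℝ) ^ 2 * μ.real (Ip l))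
          - 2 * (cnt l / (N * μ.real (Ip l)) * (Ip l).indicator (fun _ => (1 : ℝ)) x)) := by
  rw [quadraticContrast, integral_histogram_sq hmeas hdisj hfin, histogram, mul_sum,
    ← sum_sub_distrib]
  rfl

end Contrast

section LeaveOneOutCounts

variable {ι R : Type*} [DecidableEq ι] [CommRing R]

lemma sum_card_erase_self (s : Finset ι) : ∑ j ∈ s, (#(s.erase j) : R) = #s * (#s - 1) := by
  rw [sum_congr rfl fun j hj => cast_card_erase_of_mem hj, sum_const, nsmul_eq_mul]

lemma sum_card_erase_sq [Fintype ι] (s : Finset ι) :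
    ∑ j, (#(s.erase j) : R) ^ 2
      = #s * ((#s : R) - 1) ^ 2 + (Fintype.card ι - #s) * (#s : R) ^ 2 := by
  have sum_mem : ∑ j ∈ s, (#(s.erase j) : R) ^ 2 = #s * ((#s : R) - 1) ^ 2 := by
    rw [sum_congr rfl fun j hj => by rw [cast_card_erase_of_mem hj], sum_const, nsmul_eq_mul]
  have sum_notMem : ∑ j ∈ sᶜ, (#(s.erase j) : R) ^ 2
      = (Fintype.card ι - #s) * (#s : R) ^ 2 := by
    rw [sum_congr rfl fun j hj => by rw [erase_eq_of_notMem (mem_compl.mp hj)], sum_const,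
      nsmul_eq_mul, card_compl, Nat.cast_sub (card_le_univ s)]
  rw [← sum_add_sum_compl s, sum_mem, sum_notMem]

lemma sum_leaveOneOut_bin [Fintype ι] (hcard : 2 ≤ Fintype.card ι) (s : Finset ι) {m : ℝ}
    (hm : m ≠ 0) :
    ∑ j, ((#(s.erase j) : ℝ) ^ 2 / (((Fintype.card ι - 1 : ℕ) : ℝ) ^ 2 * m)
        - 2 * (#(s.erase j) / (((Fintype.card ι - 1 : ℕ) : ℝ) * m) * if j ∈ s then 1 else 0))
      = #s * (2 * Fintype.card ι - 1 - Fintype.card ι * #s)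
          / (((Fintype.card ι : ℝ) - 1) ^ 2 * m) := by
  have card_sub_one_ne_zero : (Fintype.card ι : ℝ) - 1 ≠ 0 :=
    sub_ne_zero.mpr (by exact_mod_cast (by lia : Fintype.card ι ≠ 1))
  rw [Nat.cast_pred (by lia), sum_sub_distrib, ← sum_div, ← mul_sum]
  simp only [mul_ite, mul_one, mul_zero, Fintype.sum_ite_mem]
  rw [← sum_div, sum_card_erase_sq, sum_card_erase_self]
  field_simp
  ring

end LeaveOneOutCounts

theorem stmt14_general {Ξ Λ ι : Type*} [MeasurableSpace Ξ] [Fintype Λ] [Fintype ι] [DecidableEq ι]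
    (μ : Measure Ξ) (Ip : Λ → Set Ξ) (hmeas : ∀ l, NullMeasurableSet (Ip l) μ)
    (hdisj : Pairwise (Function.onFun (AEDisjoint μ) Ip))
    (hpos : ∀ l, μ (Ip l) ≠ 0) (hfin : ∀ l, μ (Ip l) ≠ ⊤)
    (hcard : 2 ≤ Fintype.card ι) (ξ : ι → Ξ) [∀ l, DecidablePred (· ∈ Ip l)] :
    (Fintype.card ι : ℝ)⁻¹ * ∑ j, quadraticContrast μ
        (histogram μ Ip (Fintype.card ι - 1) fun l => #{i ∈ univ.erase j | ξ i ∈ Ip l}) (ξ j)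
      = ∑ l, (#{i | ξ i ∈ Ip l} : ℝ)
          * (2 * Fintype.card ι - 1 - Fintype.card ι * #{i | ξ i ∈ Ip l})
          / (Fintype.card ι * ((Fintype.card ι : ℝ) - 1) ^ 2 * μ.real (Ip l)) := by
  simp_rw [quadraticContrast_histogram hmeas hdisj hfin, filter_erase]
  rw [sum_comm, mul_sum]
  refine Fintype.sum_congr _ _ fun l => ?_
  have indicator_eq (j : ι) : (Ip l).indicator (fun _ => (1 : ℝ)) (ξ j)
      = if j ∈ ({i | ξ i ∈ Ip l} : Finset ι) then 1 else 0 := by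
    simp [Set.indicator_apply]
  have measure_ne_zero : μ.real (Ip l) ≠ 0 := ENNReal.toReal_ne_zero.mpr ⟨hpos l, hfin l⟩
  simp_rw [indicator_eq]
  rw [sum_leaveOneOut_bin hcard _ measure_ne_zero, inv_mul_eq_div, div_div]
  ring

/-- Closed-form formula for the leave-one-out estimator of the
quadratic risk of a histogram density estimator: for a finite measurable partition
`(Ip l)` of `Ξ` with `0 < μ(Ip l) < ∞`, `n ≥ 2` arbitrary points `ξ_1, …, ξ_n` with bin
counts `n_l`, and the quadratic-risk contrast `γ(t; x) = ∫ t² dμ − 2 t(x)`, the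
leave-one-out estimator `(1/n) Σ_j γ(ŝ_{D_n^{(−j)}}; ξ_j)` equals
`Σ_l n_l (2n − 1 − n n_l) / (n (n−1)² μ(Ip l))`. -/
theorem stmt14 {Ξ Λ : Type*} [MeasurableSpace Ξ] [Fintype Λ]
    (μ : Measure Ξ) [SigmaFinite μ]
    (Ip : Λ → Set Ξ) (hmeas : ∀ l, MeasurableSet (Ip l))
    (hdisj : Pairwise (Function.onFun Disjoint Ip))
    (hcover : (⋃ l, Ip l) = Set.univ)
    (hpos : ∀ l, 0 < μ (Ip l)) (hfin : ∀ l, μ (Ip l) < ⊤)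
    {n : ℕ} (hn : 2 ≤ n) (ξ : Fin n → Ξ)
    [∀ l, DecidablePred (· ∈ Ip l)] :
    ((n : ℝ))⁻¹ * ∑ j : Fin n,
        ((∫ x, (histogram μ Ip (n - 1)
            (fun l => ((Finset.univ.erase j).filter fun i => ξ i ∈ Ip l).card) x) ^ 2 ∂μ)
          - 2 * histogram μ Ip (n - 1)
              (fun l => ((Finset.univ.erase j).filter fun i => ξ i ∈ Ip l).card) (ξ j))
      = ∑ l, ((Finset.univ.filter fun i => ξ i ∈ Ip l).card : ℝ)
          * (2 * (n : ℝ) - 1 - (n : ℝ) * ((Finset.univ.filter fun i => ξ i ∈ Ip l).card : ℝ))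
          / ((n : ℝ) * ((n : ℝ) - 1) ^ 2 * (μ (Ip l)).toReal) := by
  simpa only [Fintype.card_fin, quadraticContrast, measureReal_def] using
    stmt14_general μ Ip (fun l => (hmeas l).nullMeasurableSet)
      (fun _ _ hne => (hdisj hne).aedisjoint) (fun l => (hpos l).ne') (fun l => (hfin l).ne)
      (by rwa [Fintype.card_fin]) ξ
end

section
/- Closed-form formula for the leave-one-out estimator of the risk of least-squares linear regression: let X ∈ ℝ^{n×d} be a design matrix with rows x_1ᵀ,…,x_nᵀ and Y ∈ ℝⁿ; assume XᵀX is invertible and, for every i, the leave-one-out Gram matrix Σ_{j≠i} x_j x_jᵀ is invertible (equivalently H_ii < 1 for all i, where H = X(XᵀX)⁻¹Xᵀ). Let β̂^{(−i)} be the least-squares coefficient vector computed from the data (x_j, Y_j)_{j≠i}, and ŷ = HY. Then the leave-one-out estimator of the quadratic risk satisfies (1/n) Σ_{i=1}^n (Y_i − x_iᵀ β̂^{(−i)})² = (1/n) Σ_{i=1}^n ((Y_i − ŷ_i)/(1 − H_ii))². -/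
open Finset Matrix

/-!
The leave-one-out coefficients `b = β̂^{(−i)}` satisfy the normal equations of the full data set
after `Y i` is replaced by the prediction `p = x_iᵀ b`, because the extra observation then has zero
residual. Hence `p` is the `i`-th entry of `H` applied to the modified response, that is
`p = ŷ_i + H_ii (p − Y_i)`, which rearranges to `(1 − H_ii) (Y_i − p) = Y_i − ŷ_i`. The matrix
determinant lemma shows that `1 − H_ii` is the quotient of the determinants of the Gram matrices
without and with the `i`-th row, so it may be divided by.
-/

namespace LeastSquares

variable {m n R : Type*} [CommRing R]

/-- The Gram matrix `Σ_{j ∈ s} x_j x_jᵀ` of the rows `x_j` of `X` with index in `s`. -/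
def gramOn (X : Matrix m n R) (s : Finset m) : Matrix n n R :=
  ∑ j ∈ s, vecMulVec (X j) (X j)

/-- The least-squares coefficients of the regression of `Y` on the rows of `X`, computed from the
observations in `s` only, in closed form. They are meaningful only when `gramOn X s` is
invertible, since `⁻¹` is `0` otherwise. -/
noncomputable def coeffOn [Fintype n] [DecidableEq n] (X : Matrix m n R) (Y : m → R)
    (s : Finset m) : n → R :=
  (gramOn X s)⁻¹ *ᵥ ∑ j ∈ s, Y j • X j

/-- The hat matrix `H = X (Xᵀ X)⁻¹ Xᵀ`, which sends a response to its fitted values when `Xᵀ X` is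
invertible. -/
noncomputable def hatMatrix [Fintype m] [Fintype n] [DecidableEq n] (X : Matrix m n R) :
    Matrix m m R :=
  X * (Xᵀ * X)⁻¹ * Xᵀ

theorem transpose_mulVec_eq_sum [Fintype m] (X : Matrix m n R) (Y : m → R) :
    Xᵀ *ᵥ Y = ∑ j, Y j • X j := by
  rw [mulVec_transpose, vecMul_eq_sum]

theorem mulVec_update [Fintype m] [DecidableEq m] (A : Matrix n m R) (v : m → R) (i : m) (c : R) :
    A *ᵥ Function.update v i c = A *ᵥ v + (c - v i) • A.col i := by
  have h_update : Function.update v i c = v + Pi.single i (c - v i) := by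
    ext j
    obtain rfl | hj := eq_or_ne j i <;> simp [*]
  rw [h_update, mulVec_add, mulVec_single, op_smul_eq_smul]

theorem gramOn_univ [Fintype m] (X : Matrix m n R) : gramOn X univ = Xᵀ * X := by
  ext a b
  simp only [gramOn, Matrix.sum_apply, vecMulVec_apply, mul_apply, transpose_apply]

theorem gramOn_univ_erase [Fintype m] [DecidableEq m] (X : Matrix m n R) (i : m) :
    gramOn X (univ.erase i) = Xᵀ * X - vecMulVec (X i) (X i) := by
  rw [← gramOn_univ, gramOn, gramOn, sum_erase_eq_sub (mem_univ i)]

variable [Fintype n]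

theorem gramOn_mulVec (X : Matrix m n R) (s : Finset m) (b : n → R) :
    gramOn X s *ᵥ b = ∑ j ∈ s, (X j ⬝ᵥ b) • X j := by
  simp only [gramOn, sum_mulVec, vecMulVec_mulVec, op_smul_eq_smul]

theorem transpose_mul_self_mulVec_of_gramOn_erase_mulVec [Fintype m] [DecidableEq m]
    {X : Matrix m n R} {Y : m → R} {i : m} {b : n → R}
    (hb : gramOn X (univ.erase i) *ᵥ b = ∑ j ∈ univ.erase i, Y j • X j) :
    (Xᵀ * X) *ᵥ b = Xᵀ *ᵥ Function.update Y i (X i ⬝ᵥ b) := by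
  have h_others : ∑ j ∈ univ.erase i, Function.update Y i (X i ⬝ᵥ b) j • X j
      = ∑ j ∈ univ.erase i, Y j • X j :=
    sum_congr rfl fun j hj => by rw [Function.update_of_ne (ne_of_mem_erase hj)]
  calc (Xᵀ * X) *ᵥ b
      = (X i ⬝ᵥ b) • X i + gramOn X (univ.erase i) *ᵥ b := by
        rw [← gramOn_univ, gramOn_mulVec, gramOn_mulVec, ← add_sum_erase _ _ (mem_univ i)]
    _ = (X i ⬝ᵥ b) • X i + ∑ j ∈ univ.erase i, Y j • X j := by rw [hb]
    _ = Xᵀ *ᵥ Function.update Y i (X i ⬝ᵥ b) := by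
        rw [transpose_mulVec_eq_sum, ← add_sum_erase _ _ (mem_univ i), h_others,
          Function.update_self]

variable [DecidableEq n]

theorem gramOn_mulVec_coeffOn {X : Matrix m n R} {s : Finset m}
    (hs : IsUnit (gramOn X s).det) (Y : m → R) :
    gramOn X s *ᵥ coeffOn X Y s = ∑ j ∈ s, Y j • X j := by
  rw [coeffOn, mulVec_mulVec, mul_nonsing_inv _ hs, one_mulVec]

theorem det_sub_vecMulVec {A : Matrix n n R} (hA : IsUnit A.det) (u v : n → R) :
    (A - vecMulVec u v).det = A.det * (1 - v ⬝ᵥ A⁻¹ *ᵥ u) := by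
  rw [sub_eq_add_neg, ← neg_vecMulVec, vecMulVec_eq Unit, det_add_replicateCol_mul_replicateRow hA,
    Matrix.mul_assoc, ← replicateCol_mulVec, det_unique (n := Unit), Matrix.add_apply,
    one_apply_eq, replicateRow_mul_replicateCol_apply, mulVec_neg, dotProduct_neg, ← sub_eq_add_neg]

variable [Fintype m]

theorem mulVec_eq_hatMatrix_mulVec {X : Matrix m n R} (hX : IsUnit (Xᵀ * X).det)
    {b : n → R} {Y : m → R} (hb : (Xᵀ * X) *ᵥ b = Xᵀ *ᵥ Y) :
    X *ᵥ b = hatMatrix X *ᵥ Y := by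
  rw [hatMatrix, ← mulVec_mulVec, ← hb, mulVec_mulVec, Matrix.mul_assoc, nonsing_inv_mul _ hX,
    Matrix.mul_one]

theorem hatMatrix_apply_self (X : Matrix m n R) (i : m) :
    hatMatrix X i i = X i ⬝ᵥ (Xᵀ * X)⁻¹ *ᵥ X i := by
  rw [hatMatrix, Matrix.mul_assoc]
  rfl

variable [DecidableEq m]

theorem det_gramOn_univ_erase {X : Matrix m n R} (hX : IsUnit (Xᵀ * X).det) (i : m) :
    (gramOn X (univ.erase i)).det = (Xᵀ * X).det * (1 - hatMatrix X i i) := by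
  rw [gramOn_univ_erase, det_sub_vecMulVec hX, hatMatrix_apply_self]

theorem one_sub_hatMatrix_mul_sub_dotProduct_coeffOn_erase {X : Matrix m n R}
    (hX : IsUnit (Xᵀ * X).det) {i : m} (hi : IsUnit (gramOn X (univ.erase i)).det) (Y : m → R) :
    (1 - hatMatrix X i i) * (Y i - X i ⬝ᵥ coeffOn X Y (univ.erase i))
      = Y i - (hatMatrix X *ᵥ Y) i := by
  set p := X i ⬝ᵥ coeffOn X Y (univ.erase i)
  have h_normal : (Xᵀ * X) *ᵥ coeffOn X Y (univ.erase i) = Xᵀ *ᵥ Function.update Y i p :=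
    transpose_mul_self_mulVec_of_gramOn_erase_mulVec (gramOn_mulVec_coeffOn hi Y)
  have h_fit : p = (hatMatrix X *ᵥ Y) i + (p - Y i) * hatMatrix X i i :=
    calc p = (hatMatrix X *ᵥ Function.update Y i p) i :=
          congrFun (mulVec_eq_hatMatrix_mulVec hX h_normal) i
      _ = (hatMatrix X *ᵥ Y) i + (p - Y i) * hatMatrix X i i := by
          rw [mulVec_update, Pi.add_apply, Pi.smul_apply, col_apply, smul_eq_mul]
  linear_combination -h_fit

end LeastSquares

open LeastSquares in
theorem stmt15_general {m n K : Type*} [Fintype m] [DecidableEq m] [Fintype n] [DecidableEq n]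
    [Field K] (X : Matrix m n K) (Y : m → K) (hX : IsUnit (Xᵀ * X).det) {i : m}
    (hi : IsUnit (gramOn X (univ.erase i)).det) :
    Y i - X i ⬝ᵥ coeffOn X Y (univ.erase i)
      = (Y i - (hatMatrix X *ᵥ Y) i) / (1 - hatMatrix X i i) := by
  have h_leverage : 1 - hatMatrix X i i ≠ 0 :=
    right_ne_zero_of_mul (det_gramOn_univ_erase hX i ▸ hi.ne_zero)
  rw [eq_div_iff h_leverage, mul_comm, one_sub_hatMatrix_mul_sub_dotProduct_coeffOn_erase hX hi]

/-- Closed-form formula for the leave-one-out estimator of the risk of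
least-squares linear regression: if `XᵀX` is invertible and, for every `i`, the
leave-one-out Gram matrix `Σ_{j≠i} x_j x_jᵀ` is invertible (equivalently `H_ii < 1` for
all `i`, where `H = X(XᵀX)⁻¹Xᵀ`), then, with `β̂^{(−i)}` the least-squares coefficients
computed from `(x_j, Y_j)_{j≠i}` and `ŷ = HY`,
`(1/n) Σ_i (Y_i − x_iᵀ β̂^{(−i)})² = (1/n) Σ_i ((Y_i − ŷ_i)/(1 − H_ii))²`. -/
theorem stmt15 {n d : ℕ} (M : Matrix (Fin n) (Fin d) ℝ) (Y : Fin n → ℝ)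
    (hinv : IsUnit (Mᵀ * M).det)
    (hinvLoo : ∀ i : Fin n,
      IsUnit (∑ j ∈ Finset.univ.erase i, vecMulVec (M j) (M j)).det)
    (hH : ∀ i : Fin n, (M * (Mᵀ * M)⁻¹ * Mᵀ) i i < 1) :
    ((n : ℝ))⁻¹ * ∑ i : Fin n,
        (Y i - M i ⬝ᵥ ((∑ j ∈ Finset.univ.erase i, vecMulVec (M j) (M j))⁻¹
            *ᵥ (∑ j ∈ Finset.univ.erase i, Y j • M j))) ^ 2
      = ((n : ℝ))⁻¹ * ∑ i : Fin n,
        ((Y i - ((M * (Mᵀ * M)⁻¹ * Mᵀ) *ᵥ Y) i)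
          / (1 - (M * (Mᵀ * M)⁻¹ * Mᵀ) i i)) ^ 2 := by
  congr! 3 with i
  exact stmt15_general M Y hinv (hinvLoo i)
end
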